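/- The axiom scheme ALLeq (∀x x≡y → (∀xφ → ∀yφ)) is not provable from the set of axiom schemes TMM ∖ {spec, ALLeq}. -/

import Mathlib

set_option autoImplicit false

/-! ## Megill-style scheme-level formalization of first-order logic -/

/-- Metavariables: variable metavariables `vr i` (standing for x_i) and
formula metavariables `fm i` (standing for φ_i). -/
inductive MV : Type
  | vr (i : ℕ) : MV
  | fm (i : ℕ) : MV
  deriving DecidableEq

/-- Metaformulas over the pure language of equality. -/
inductive MF : Type
  | phi (i : ℕ) : MF
  | eq (i j : ℕ) : MF
  | imp (a b : MF) : MF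
  | not (a : MF) : MF
  | all (i : ℕ) (a : MF) : MF
  deriving DecidableEq

/-- The set of metavariables occurring in a metaformula. -/
def MF.OC : MF → Set MV
  | .phi i => {MV.fm i}
  | .eq i j => {MV.vr i, MV.vr j}
  | .imp a b => a.OC ∪ b.OC
  | .not a => a.OC
  | .all i a => insert (MV.vr i) a.OC

/-- A scheme: finitely many hypotheses, a conclusion, and disjoint-variable
(DV) conditions given as unordered pairs of metavariables. -/
structure Scheme : Type where
  hyps : Finset MF
  concl : MF
  dv : Set (Sym2 MV)

/-- Metavariables occurring in a scheme (in its hypotheses or conclusion). -/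
def Scheme.OC (Φ : Scheme) : Set MV :=
  {m | ∃ h ∈ Φ.hyps, m ∈ h.OC} ∪ Φ.concl.OC

/-- A (type-preserving) substitution: variable metavariables go to variable
metavariables, formula metavariables go to metaformulas; it is the identity
outside a finite set. -/
structure Subst : Type where
  vr : ℕ → ℕ
  fm : ℕ → MF
  finVr : {i : ℕ | vr i ≠ i}.Finite
  finFm : {i : ℕ | fm i ≠ MF.phi i}.Finite

/-- Action of a substitution on a metaformula. -/
def MF.substMF (σ : Subst) : MF → MF
  | .phi i => σ.fm i
  | .eq i j => .eq (σ.vr i) (σ.vr j)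
  | .imp a b => .imp (a.substMF σ) (b.substMF σ)
  | .not a => .not (a.substMF σ)
  | .all i a => .all (σ.vr i) (a.substMF σ)

/-- The set of metavariables occurring in the image of a metavariable. -/
def Subst.appMV (σ : Subst) : MV → Set MV
  | .vr i => {MV.vr (σ.vr i)}
  | .fm i => (σ.fm i).OC

/-- σ is the identity on a given metavariable. -/
def Subst.Fixes (σ : Subst) : MV → Prop
  | .vr i => σ.vr i = i
  | .fm i => σ.fm i = MF.phi i

/-- A substitution is legitimate on a scheme if it does not violate its
DV conditions. -/
def Subst.Legit (σ : Subst) (Φ : Scheme) : Prop :=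
  ∀ m n : MV, s(m, n) ∈ Φ.dv → σ.appMV m ∩ σ.appMV n = ∅

/-- Propagation of DV conditions along a substitution. -/
def Subst.dvMap (σ : Subst) (D : Set (Sym2 MV)) : Set (Sym2 MV) :=
  {q | ∃ m' n' m n : MV, s(m', n') ∈ D ∧ m ∈ σ.appMV m' ∧ n ∈ σ.appMV n' ∧ q = s(m, n)}

/-- Action of a substitution on a scheme. -/
def Scheme.substS (Φ : Scheme) (σ : Subst) : Scheme :=
  ⟨Φ.hyps.image (MF.substMF σ), Φ.concl.substMF σ, σ.dvMap Φ.dv⟩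

/-- `Φ.Inst Ψ` : Ψ is an instance of Φ, i.e. the result of a legitimate
substitution, possibly followed by the addition of DV conditions. -/
def Scheme.Inst (Φ Ψ : Scheme) : Prop :=
  ∃ σ : Subst, σ.Legit Φ ∧ Ψ.hyps = Φ.hyps.image (MF.substMF σ) ∧
    Ψ.concl = Φ.concl.substMF σ ∧ σ.dvMap Φ.dv ⊆ Ψ.dv

/-- Metavariables occurring in a list of metaformulas. -/
def listOC (P : List MF) : Set MV := {m | ∃ f ∈ P, m ∈ f.OC}

/-- The DV conditions of a proof `P` of the scheme `Φ`: those of `Φ`, plus all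
pairs {m, n} where m is a dummy metavariable of `P` and n occurs in `P`. -/
def proofDV (Φ : Scheme) (P : List MF) : Set (Sym2 MV) :=
  Φ.dv ∪ {q | ∃ m n : MV, m ∈ listOC P ∧ m ∉ Φ.OC ∧ n ∈ listOC P ∧ q = s(m, n)}

/-- `P` is a proof of the scheme `Φ` from the set `S` of schemes. -/
def IsProof (S : Set Scheme) (Φ : Scheme) (P : List MF) : Prop :=
  P ≠ [] ∧ P.getLast? = some Φ.concl ∧
  ∀ (k : ℕ) (hk : k < P.length),
    P.get ⟨k, hk⟩ ∈ Φ.hyps ∨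
    ∃ hs : Finset MF,
      (∀ h ∈ hs, ∃ (l : ℕ) (hl : l < k), P.get ⟨l, hl.trans hk⟩ = h) ∧
      ∃ Ξ ∈ S, Ξ.Inst ⟨hs, P.get ⟨k, hk⟩, proofDV Φ P⟩

/-- `S ⊢ Φ` : the scheme `Φ` is provable from the set `S` of schemes. -/
def Provable (S : Set Scheme) (Φ : Scheme) : Prop := ∃ P : List MF, IsProof S Φ P

/-! ## Object level: first-order formulas and semantics -/

/-- First-order formulas over the pure language of equality, with
individual variables v_i. -/
inductive FM : Type
  | eq (i j : ℕ) : FM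
  | imp (a b : FM) : FM
  | not (a : FM) : FM
  | all (i : ℕ) (a : FM) : FM
  deriving DecidableEq

/-- Variables occurring in a first-order formula. -/
def FM.vars : FM → Set ℕ
  | .eq i j => {i, j}
  | .imp a b => a.vars ∪ b.vars
  | .not a => a.vars
  | .all i a => insert i a.vars

/-- An object-substitution: variable metavariables go to individual variables,
formula metavariables go to first-order formulas. -/
structure OSubst : Type where
  vr : ℕ → ℕ
  fm : ℕ → FM

/-- Action of an object-substitution on a metaformula, yielding a first-order
formula (an object-instance). -/
def MF.osubst (τ : OSubst) : MF → FM
  | .phi i => τ.fm i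
  | .eq i j => .eq (τ.vr i) (τ.vr j)
  | .imp a b => .imp (a.osubst τ) (b.osubst τ)
  | .not a => .not (a.osubst τ)
  | .all i a => .all (τ.vr i) (a.osubst τ)

/-- Variables occurring in the image of a metavariable. -/
def OSubst.appVars (τ : OSubst) : MV → Set ℕ
  | .vr i => {τ.vr i}
  | .fm i => (τ.fm i).vars

/-- An object-substitution is legitimate on a scheme if images of DV-paired
metavariables share no variables. -/
def OSubst.Legit (τ : OSubst) (Φ : Scheme) : Prop :=
  ∀ m n : MV, s(m, n) ∈ Φ.dv → τ.appVars m ∩ τ.appVars n = ∅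

/-- Evaluation of a first-order formula in a structure with domain `D`
(equality interpreted as equality) under an assignment `ρ`. -/
def FM.eval {D : Type} (ρ : ℕ → D) : FM → Prop
  | .eq i j => ρ i = ρ j
  | .imp a b => a.eval ρ → b.eval ρ
  | .not a => ¬ a.eval ρ
  | .all i a => ∀ d : D, a.eval (Function.update ρ i d)

/-- Validity of a first-order formula in the structure with domain `D`. -/
def FM.Valid (D : Type) (f : FM) : Prop := ∀ ρ : ℕ → D, f.eval ρ

/-- A scheme is true if for every legitimate object-instance and every
nonempty domain, the conclusion is valid whenever all hypotheses are. -/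
def Scheme.IsTrue (Φ : Scheme) : Prop :=
  ∀ τ : OSubst, τ.Legit Φ →
    ∀ D : Type, Nonempty D →
      (∀ h ∈ Φ.hyps, FM.Valid D (h.osubst τ)) → FM.Valid D (Φ.concl.osubst τ)

/-! ## (i,j)-transforms and supertruth -/

/-- Auxiliary: (i,j)-transform with a flag recording whether we are inside the
scope of a quantifier ∀x_i. -/
def MF.transfAux (i j : ℕ) : MF → Bool → MF
  | .phi k, _ => .phi k
  | .eq a b, ins =>
      .eq (if ins = true ∧ a = j then i else a) (if ins = true ∧ b = j then i else b)
  | .imp a b, ins => .imp (a.transfAux i j ins) (b.transfAux i j ins)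
  | .not a, ins => .not (a.transfAux i j ins)
  | .all k a, ins =>
      .all (if ins = true ∧ k = j then i else k) (a.transfAux i j (ins || decide (k = i)))

/-- The (i,j)-transform of a metaformula: replace every occurrence of x_j
lying within the scope of a quantifier ∀x_i by x_i. -/
def MF.transform (i j : ℕ) (f : MF) : MF := f.transfAux i j false

/-- The (i,j)-transform of a scheme: transform hypotheses and conclusion,
keep the DV conditions. -/
def Scheme.transform (i j : ℕ) (Φ : Scheme) : Scheme :=
  ⟨Φ.hyps.image (MF.transform i j), Φ.concl.transform i j, Φ.dv⟩

/-- The (i,j)-transform (and the {i,j}-transform) is legitimate on a scheme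
if {x_i, x_j} is not among its DV conditions. -/
def Scheme.TLegit (i j : ℕ) (Φ : Scheme) : Prop := s(MV.vr i, MV.vr j) ∉ Φ.dv

/-- A (hypothesis-free) scheme is presupertrue if all the legitimate
(i,j)-transforms of all its instances (including itself) are true. -/
def Scheme.PreST (Φ : Scheme) : Prop :=
  ∀ Ψ : Scheme, (Ψ = Φ ∨ Φ.Inst Ψ) → ∀ i j : ℕ, Ψ.TLegit i j → (Ψ.transform i j).IsTrue

/-- A scheme is supertrue if every instance of it (including itself) satisfies:
whenever all legitimate (i,j)-transforms of all instances of each of its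
hypotheses (taken as hypothesis-free schemes with the inherited DV conditions)
are true, all legitimate (i,j)-transforms of all instances of its conclusion
are true. -/
def Scheme.Supertrue (Φ : Scheme) : Prop :=
  ∀ Ψ : Scheme, (Ψ = Φ ∨ Φ.Inst Ψ) →
    (∀ h ∈ Ψ.hyps, Scheme.PreST ⟨∅, h, Ψ.dv⟩) → Scheme.PreST ⟨∅, Ψ.concl, Ψ.dv⟩

/-- The {i,j}-transform of a metaformula: the composite of the (i,j)-transform
and the (j,i)-transform, the one with smaller first index performed first. -/
def MF.stransform (i j : ℕ) (f : MF) : MF :=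
  if i ≤ j then (f.transform i j).transform j i else (f.transform j i).transform i j

/-- The {i,j}-transform of a scheme. -/
def Scheme.stransform (i j : ℕ) (Φ : Scheme) : Scheme :=
  ⟨Φ.hyps.image (MF.stransform i j), Φ.concl.stransform i j, Φ.dv⟩

/-- A metaformula contains no formula metavariables. -/
def MF.FmFree : MF → Prop
  | .phi _ => False
  | .eq _ _ => True
  | .imp a b => a.FmFree ∧ b.FmFree
  | .not a => a.FmFree
  | .all _ a => a.FmFree

/-- A scheme contains no formula metavariables. -/
def Scheme.FmFree (Φ : Scheme) : Prop := (∀ h ∈ Φ.hyps, h.FmFree) ∧ Φ.concl.FmFree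

/-- A (hypothesis-free) scheme is pre-semisupertrue if all the legitimate
{i,j}-transforms of all its instances (including itself) are true. -/
def Scheme.PreSST (Φ : Scheme) : Prop :=
  ∀ Ψ : Scheme, (Ψ = Φ ∨ Φ.Inst Ψ) → ∀ i j : ℕ, Ψ.TLegit i j → (Ψ.stransform i j).IsTrue

/-- A scheme is semisupertrue if it is true and every formula-metavariable-free
instance of it satisfies: whenever all legitimate {i,j}-transforms of all
instances of each of its hypotheses are true, all legitimate {i,j}-transforms
of all instances of its conclusion are true. -/
def Scheme.Semisupertrue (Φ : Scheme) : Prop :=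
  Φ.IsTrue ∧
  ∀ Ψ : Scheme, (Ψ = Φ ∨ Φ.Inst Ψ) → Ψ.FmFree →
    (∀ h ∈ Ψ.hyps, Scheme.PreSST ⟨∅, h, Ψ.dv⟩) → Scheme.PreSST ⟨∅, Ψ.concl, Ψ.dv⟩

/-- A metaformula is quantifier-free. -/
def MF.QFree : MF → Prop
  | .phi _ => True
  | .eq _ _ => True
  | .imp a b => a.QFree ∧ b.QFree
  | .not a => a.QFree
  | .all _ _ => False

/-- A scheme is quantifier-free. -/
def Scheme.QFree (Φ : Scheme) : Prop := (∀ h ∈ Φ.hyps, h.QFree) ∧ Φ.concl.QFree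

/-! ## The axiom schemes of the system TMM
(x = x_0, y = x_1, z = x_2; φ = φ_0, ψ = φ_1, χ = φ_2, θ = φ_3, τ = φ_4) -/

def ax_mp : Scheme := ⟨{.phi 0, .imp (.phi 0) (.phi 1)}, .phi 1, ∅⟩

def ax_minimp : Scheme :=
  ⟨∅, .imp (.phi 0) (.imp (.imp (.phi 1) (.phi 2))
      (.imp (.imp (.imp (.phi 3) (.phi 1)) (.imp (.phi 2) (.phi 4)))
        (.imp (.phi 1) (.phi 4)))), ∅⟩

def ax_peirce : Scheme := ⟨∅, .imp (.imp (.imp (.phi 0) (.phi 1)) (.phi 0)) (.phi 0), ∅⟩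

def ax_contrap : Scheme :=
  ⟨∅, .imp (.imp (.phi 0) (.not (.phi 1))) (.imp (.phi 1) (.not (.phi 0))), ∅⟩

def ax_notelim : Scheme := ⟨∅, .imp (.not (.phi 0)) (.imp (.phi 0) (.phi 1)), ∅⟩

def ax_gen : Scheme := ⟨{.phi 0}, .all 0 (.phi 0), ∅⟩

def ax_ALLdistr : Scheme :=
  ⟨∅, .imp (.all 0 (.imp (.phi 0) (.phi 1))) (.imp (.all 0 (.phi 0)) (.all 0 (.phi 1))), ∅⟩

def ax_spec : Scheme := ⟨∅, .imp (.all 0 (.phi 0)) (.phi 0), ∅⟩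

def ax_modal5 : Scheme :=
  ⟨∅, .imp (.not (.all 0 (.phi 0))) (.all 0 (.not (.all 0 (.phi 0)))), ∅⟩

def ax_vacGen : Scheme := ⟨∅, .imp (.phi 0) (.all 0 (.phi 0)), {s(MV.vr 0, MV.fm 0)}⟩

def ax_ALLcomm : Scheme :=
  ⟨∅, .imp (.all 0 (.all 1 (.phi 0))) (.all 1 (.all 0 (.phi 0))), ∅⟩

def ax_EQrefl : Scheme := ⟨∅, .eq 0 0, ∅⟩

def ax_EQsymm : Scheme := ⟨∅, .imp (.eq 0 1) (.eq 1 0), ∅⟩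

def ax_EQtrans : Scheme := ⟨∅, .imp (.eq 0 1) (.imp (.eq 1 2) (.eq 0 2)), ∅⟩

def ax_denot : Scheme :=
  ⟨∅, .imp (.eq 0 0) (.not (.all 1 (.not (.eq 1 0)))), {s(MV.vr 0, MV.vr 1)}⟩

def ax_subst : Scheme :=
  ⟨∅, .all 0 (.imp (.eq 0 1) (.imp (.phi 0) (.all 0 (.imp (.eq 0 1) (.phi 0))))),
    {s(MV.vr 0, MV.vr 1), s(MV.vr 1, MV.fm 0)}⟩

def ax_ALLeq : Scheme :=
  ⟨∅, .imp (.all 0 (.eq 0 1)) (.imp (.all 0 (.phi 0)) (.all 1 (.phi 0))), ∅⟩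

def ax_genEq : Scheme :=
  ⟨∅, .imp (.not (.all 0 (.eq 0 1)))
      (.imp (.not (.all 0 (.eq 0 2))) (.imp (.eq 1 2) (.all 0 (.eq 1 2)))), ∅⟩

def ax_modalD : Scheme := ⟨∅, .imp (.all 0 (.not (.phi 0))) (.not (.all 0 (.phi 0))), ∅⟩

def ax_modal4 : Scheme := ⟨∅, .imp (.all 0 (.phi 0)) (.all 0 (.all 0 (.phi 0))), ∅⟩

/-- The system TMM. -/
def TMM : Set Scheme :=
  {ax_mp, ax_minimp, ax_peirce, ax_contrap, ax_notelim, ax_gen, ax_ALLdistr, ax_spec,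
   ax_modal5, ax_vacGen, ax_ALLcomm, ax_EQrefl, ax_EQsymm, ax_EQtrans, ax_denot,
   ax_subst, ax_ALLeq, ax_genEq}

/-- The subsystem T. -/
def Tsys : Set Scheme :=
  {ax_mp, ax_minimp, ax_peirce, ax_contrap, ax_notelim, ax_gen, ax_ALLdistr, ax_vacGen,
   ax_EQrefl, ax_EQsymm, ax_EQtrans, ax_denot}

/-!
In the `(x, y)`-transform of a formula, `y` is read as `x` inside the scope of a `∀x`. All schemes
of TMM other than spec and ALLeq, and hence everything they prove, remain true under this reading
for object-instances that keep metavariables under a DV condition apart even when `y` is identified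
with `x`. A dummy metavariable of a proof can always be sent to fresh variables, so it imposes no
restriction on the instances of the proved scheme. The transform of the instance
`∀x x≡y → (∀x x≡y → ∀y x≡y)` of ALLeq is `∀x x≡x → (∀x x≡x → ∀y x≡y)`, which fails in any domain
with at least two elements.
-/

/-- The reading of the variable `k` in an `(x, y)`-transform, the flag telling whether it lies in
the scope of a `∀x`. In particular `transformVar x y true` identifies `y` with `x`. -/
def transformVar (x y : ℕ) (inScope : Bool) (k : ℕ) : ℕ :=
  if inScope = true ∧ k = y then x else k

/-- Truth in the structure `D` of the `(x, y)`-transform of a formula; as in `MF.transfAux`, the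
flag records whether the formula lies in the scope of a `∀x`. -/
def FM.transformEval (x y : ℕ) {D : Type} : FM → Bool → (ℕ → D) → Prop
  | .eq i j, b, ρ => ρ (transformVar x y b i) = ρ (transformVar x y b j)
  | .imp p q, b, ρ => p.transformEval x y b ρ → q.transformEval x y b ρ
  | .not p, b, ρ => ¬ p.transformEval x y b ρ
  | .all i p, b, ρ =>
      ∀ d : D, p.transformEval x y (b || decide (i = x))
        (Function.update ρ (transformVar x y b i) d)

/-- Validity in `D` of the `(x, y)`-transform. Both flags are required, so that validity is
preserved by generalization over `x`. -/
def FM.TransformValid (x y : ℕ) (D : Type) (f : FM) : Prop :=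
  ∀ (b : Bool) (ρ : ℕ → D), f.transformEval x y b ρ

/-- The images under `τ` of two distinct metavariables paired in `𝒟` share no variable, even after
identification of `y` with `x`. Pairs `{m, m}` are ignored because `proofDV` contains them for the
dummy metavariables `m`. -/
def OSubst.TransformLegit (x y : ℕ) (τ : OSubst) (𝒟 : Set (Sym2 MV)) : Prop :=
  ∀ m n : MV, s(m, n) ∈ 𝒟 → m ≠ n → ∀ i ∈ τ.appVars m, ∀ j ∈ τ.appVars n,
    transformVar x y true i ≠ transformVar x y true j

/-- Analogue of `Scheme.IsTrue` for `(x, y)`-transforms of object-instances. Unlike in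
`Scheme.transform`, the transform is applied after the formula metavariables have been instantiated,
so that it also acts on the formulas substituted for them. -/
def Scheme.TransformTrue (x y : ℕ) (Φ : Scheme) : Prop :=
  ∀ τ : OSubst, τ.TransformLegit x y Φ.dv → ∀ D : Type,
    (∀ h ∈ Φ.hyps, (h.osubst τ).TransformValid x y D) → (Φ.concl.osubst τ).TransformValid x y D

section Substitution

/-- The object-substitution `τ ∘ σ`. -/
def OSubst.comp (τ : OSubst) (σ : Subst) : OSubst where
  vr i := τ.vr (σ.vr i)
  fm k := (σ.fm k).osubst τ

theorem MF.osubst_substMF (τ : OSubst) (σ : Subst) (f : MF) :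
    (f.substMF σ).osubst τ = f.osubst (τ.comp σ) := by
  induction f with
  | phi k => rfl
  | eq i j => rfl
  | imp p q ihp ihq => simp only [MF.substMF, MF.osubst, ihp, ihq]
  | not p ih => simp only [MF.substMF, MF.osubst, ih]
  | all i p ih => simp only [MF.substMF, MF.osubst, ih, OSubst.comp]

theorem MF.osubst_congr {τ τ' : OSubst} {f : MF}
    (hvr : ∀ i, MV.vr i ∈ f.OC → τ.vr i = τ'.vr i)
    (hfm : ∀ k, MV.fm k ∈ f.OC → τ.fm k = τ'.fm k) : f.osubst τ = f.osubst τ' := by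
  induction f with
  | phi k => exact hfm k rfl
  | eq i j => simp only [MF.osubst, hvr i (Or.inl rfl), hvr j (Or.inr rfl)]
  | imp p q ihp ihq =>
    simp only [MF.osubst, ihp (fun i hi => hvr i (Or.inl hi)) fun k hk => hfm k (Or.inl hk),
      ihq (fun i hi => hvr i (Or.inr hi)) fun k hk => hfm k (Or.inr hk)]
  | not p ih => simp only [MF.osubst, ih hvr hfm]
  | all i p ih =>
    simp only [MF.osubst, hvr i (Or.inl rfl),
      ih (fun i hi => hvr i (Or.inr hi)) fun k hk => hfm k (Or.inr hk)]

theorem MF.exists_mem_OC_of_mem_vars_osubst {τ : OSubst} {f : MF} {i : ℕ}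
    (hi : i ∈ (f.osubst τ).vars) : ∃ m ∈ f.OC, i ∈ τ.appVars m := by
  induction f with
  | phi k => exact ⟨.fm k, rfl, hi⟩
  | eq j k =>
    rcases hi with hi | hi
    · exact ⟨.vr j, Or.inl rfl, hi⟩
    · exact ⟨.vr k, Or.inr rfl, hi⟩
  | imp p q ihp ihq =>
    rcases hi with hi | hi
    · obtain ⟨m, hm, him⟩ := ihp hi
      exact ⟨m, Or.inl hm, him⟩
    · obtain ⟨m, hm, him⟩ := ihq hi
      exact ⟨m, Or.inr hm, him⟩
  | not p ih => exact ih hi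
  | all j p ih =>
    rcases hi with hi | hi
    · exact ⟨.vr j, Or.inl rfl, hi⟩
    · obtain ⟨m, hm, him⟩ := ih hi
      exact ⟨m, Or.inr hm, him⟩

theorem OSubst.exists_mem_appMV_of_mem_appVars_comp {τ : OSubst} {σ : Subst} {m : MV} {i : ℕ}
    (hi : i ∈ (τ.comp σ).appVars m) : ∃ n ∈ σ.appMV m, i ∈ τ.appVars n := by
  cases m with
  | vr k => exact ⟨.vr (σ.vr k), rfl, hi⟩
  | fm k => exact MF.exists_mem_OC_of_mem_vars_osubst hi

theorem OSubst.TransformLegit.comp {x y : ℕ} {τ : OSubst} {σ : Subst} {Φ : Scheme}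
    (hτ : τ.TransformLegit x y (σ.dvMap Φ.dv)) (hσ : σ.Legit Φ) :
    (τ.comp σ).TransformLegit x y Φ.dv := by
  intro m n hmn _ i hi j hj
  obtain ⟨m', hm', him'⟩ := exists_mem_appMV_of_mem_appVars_comp hi
  obtain ⟨n', hn', hjn'⟩ := exists_mem_appMV_of_mem_appVars_comp hj
  have hne : m' ≠ n' := by
    rintro rfl
    exact Set.eq_empty_iff_forall_notMem.1 (hσ m n hmn) m' ⟨hm', hn'⟩
  exact hτ m' n' ⟨m, n, m', n', hmn, hm', hn', rfl⟩ hne i him' j hjn'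

theorem Scheme.TransformTrue.inst {x y : ℕ} {Φ Ψ : Scheme} (hΦ : Φ.TransformTrue x y)
    (hΨ : Φ.Inst Ψ) : Ψ.TransformTrue x y := by
  obtain ⟨σ, hσ, hhyps, hconcl, hdv⟩ := hΨ
  intro τ hτ D hvalid
  have hlegit : (τ.comp σ).TransformLegit x y Φ.dv :=
    OSubst.TransformLegit.comp (fun m n hmn => hτ m n (hdv hmn)) hσ
  rw [hconcl, MF.osubst_substMF]
  refine hΦ _ hlegit D fun h hh => ?_
  rw [← MF.osubst_substMF]
  exact hvalid _ (hhyps ▸ Finset.mem_image_of_mem _ hh)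

end Substitution

section FreshVariables

theorem MF.finite_OC (f : MF) : f.OC.Finite := by
  induction f with
  | phi k => exact Set.finite_singleton _
  | eq i j => exact (Set.finite_singleton _).insert _
  | imp p q ihp ihq => exact ihp.union ihq
  | not _ ih => exact ih
  | all i p ih => exact ih.insert _

theorem Scheme.finite_OC (Φ : Scheme) : Φ.OC.Finite := by
  have hhyps : {m | ∃ h ∈ Φ.hyps, m ∈ h.OC} = ⋃ h ∈ Φ.hyps, h.OC := by
    ext m
    simp only [Set.mem_ofPred_eq, Set.mem_iUnion, exists_prop]
  rw [Scheme.OC, hhyps]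
  exact (Φ.hyps.finite_toSet.biUnion fun h _ => h.finite_OC).union Φ.concl.finite_OC

theorem FM.finite_vars (f : FM) : f.vars.Finite := by
  induction f with
  | eq i j => exact (Set.finite_singleton _).insert _
  | imp p q ihp ihq => exact ihp.union ihq
  | not _ ih => exact ih
  | all i p ih => exact ih.insert _

theorem OSubst.finite_appVars (τ : OSubst) (m : MV) : (τ.appVars m).Finite := by
  cases m with
  | vr i => exact Set.finite_singleton _
  | fm k => exact (τ.fm k).finite_vars

/-- An injective numbering of the metavariables, for choosing pairwise distinct fresh variables. -/
def MV.code : MV → ℕ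
  | .vr i => 2 * i
  | .fm k => 2 * k + 1

theorem MV.code_injective : Function.Injective MV.code := by
  rintro (i | i) (j | j) h <;> simp only [MV.code, MV.vr.injEq, MV.fm.injEq] at h ⊢ <;> omega

open Classical in
/-- The object-substitution that agrees with `τ` on `A` and maps the metavariables outside `A` to
pairwise distinct variables starting at `N`, or to formulas in such variables. -/
noncomputable def OSubst.extendFresh (τ : OSubst) (A : Set MV) (N : ℕ) : OSubst where
  vr i := if MV.vr i ∈ A then τ.vr i else N + (MV.vr i).code
  fm k := if MV.fm k ∈ A then τ.fm k else .eq (N + (MV.fm k).code) (N + (MV.fm k).code)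

theorem OSubst.appVars_extendFresh_of_mem (τ : OSubst) {A : Set MV} (N : ℕ) {m : MV} (hm : m ∈ A) :
    (τ.extendFresh A N).appVars m = τ.appVars m := by
  cases m <;> simp only [appVars, extendFresh, if_pos hm]

theorem OSubst.appVars_extendFresh_of_notMem (τ : OSubst) {A : Set MV} (N : ℕ) {m : MV}
    (hm : m ∉ A) : (τ.extendFresh A N).appVars m = {N + m.code} := by
  cases m <;> simp only [appVars, extendFresh, if_neg hm, FM.vars, Set.pair_eq_singleton]

theorem MF.osubst_extendFresh (τ : OSubst) {A : Set MV} (N : ℕ) {f : MF} (hf : f.OC ⊆ A) :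
    f.osubst (τ.extendFresh A N) = f.osubst τ :=
  MF.osubst_congr (fun _ hi => if_pos (hf hi)) fun _ hk => if_pos (hf hk)

theorem OSubst.exists_bound_appVars (τ : OSubst) {A : Set MV} (hA : A.Finite) (x y : ℕ) :
    ∃ N, x < N ∧ y < N ∧ ∀ m ∈ A, ∀ i ∈ τ.appVars m, i < N := by
  have hfin : (insert x (insert y (⋃ m ∈ A, τ.appVars m))).Finite :=
    ((hA.biUnion fun m _ => τ.finite_appVars m).insert y).insert x
  obtain ⟨B, hB⟩ := hfin.bddAbove
  refine ⟨B + 1, Nat.lt_succ_of_le (hB (Or.inl rfl)),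
    Nat.lt_succ_of_le (hB (Or.inr (Or.inl rfl))), fun m hm i hi => ?_⟩
  exact Nat.lt_succ_of_le (hB (Or.inr (Or.inr (Set.mem_biUnion hm hi))))

theorem mem_dv_of_mem_proofDV {Φ : Scheme} {P : List MF} {m n : MV} (hmn : s(m, n) ∈ proofDV Φ P)
    (hm : m ∈ Φ.OC) (hn : n ∈ Φ.OC) : s(m, n) ∈ Φ.dv := by
  rcases hmn with hmn | ⟨m', n', _, hm', _, heq⟩
  · exact hmn
  · rcases Sym2.eq_iff.1 heq with ⟨rfl, rfl⟩ | ⟨rfl, rfl⟩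
    · exact absurd hm hm'
    · exact absurd hn hm'

theorem OSubst.TransformLegit.extendFresh {x y N : ℕ} {τ : OSubst} {Φ : Scheme}
    (hτ : τ.TransformLegit x y Φ.dv) (hx : x < N) (hy : y < N)
    (hN : ∀ m ∈ Φ.OC, ∀ i ∈ τ.appVars m, i < N) (P : List MF) :
    (τ.extendFresh Φ.OC N).TransformLegit x y (proofDV Φ P) := by
  have fresh_ne {m n : MV} (hmn : m ≠ n) {j : ℕ}
      (hj : j ∈ (τ.extendFresh Φ.OC N).appVars n) :
      transformVar x y true (N + m.code) ≠ transformVar x y true j := by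
    have hcode : m.code ≠ n.code := MV.code_injective.ne hmn
    have hj' : j < N ∨ j = N + n.code := by
      by_cases hn : n ∈ Φ.OC
      · exact Or.inl (hN n hn j (τ.appVars_extendFresh_of_mem N hn ▸ hj))
      · rw [τ.appVars_extendFresh_of_notMem N hn] at hj
        exact Or.inr hj
    grind [transformVar]
  intro m n hmn hne i hi j hj
  by_cases hm : m ∈ Φ.OC
  · by_cases hn : n ∈ Φ.OC
    · rw [τ.appVars_extendFresh_of_mem N hm] at hi
      rw [τ.appVars_extendFresh_of_mem N hn] at hj
      exact hτ m n (mem_dv_of_mem_proofDV hmn hm hn) hne i hi j hj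
    · rw [τ.appVars_extendFresh_of_notMem N hn] at hj
      obtain rfl : j = N + n.code := hj
      exact (fresh_ne hne.symm hi).symm
  · rw [τ.appVars_extendFresh_of_notMem N hm] at hi
    obtain rfl : i = N + m.code := hi
    exact fresh_ne hne hj

end FreshVariables

section Soundness

theorem IsProof.induction {S : Set Scheme} {Φ : Scheme} {P : List MF} (hP : IsProof S Φ P)
    {Q : MF → Prop} (hyp : ∀ h ∈ Φ.hyps, Q h)
    (step : ∀ Ξ ∈ S, ∀ hs f, Ξ.Inst ⟨hs, f, proofDV Φ P⟩ → (∀ h ∈ hs, Q h) → Q f) :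
    Q Φ.concl := by
  have hentry : ∀ (k : ℕ) (hk : k < P.length), Q (P.get ⟨k, hk⟩) := by
    intro k
    induction k using Nat.strong_induction_on with
    | _ k ih =>
      intro hk
      rcases hP.2.2 k hk with hmem | ⟨hs, hearlier, Ξ, hΞ, hinst⟩
      · exact hyp _ hmem
      · refine step Ξ hΞ hs _ hinst fun h hh => ?_
        obtain ⟨l, hl, rfl⟩ := hearlier h hh
        exact ih l hl _
  obtain ⟨k, hk⟩ := List.mem_iff_get.1 (List.mem_of_getLast? hP.2.1)
  exact hk ▸ hentry k k.isLt

theorem Provable.transformTrue {x y : ℕ} {S : Set Scheme} {Φ : Scheme} (hΦ : Provable S Φ)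
    (hS : ∀ Ξ ∈ S, Ξ.TransformTrue x y) : Φ.TransformTrue x y := by
  obtain ⟨P, hP⟩ := hΦ
  intro τ hτ D hvalid
  obtain ⟨N, hx, hy, hN⟩ := τ.exists_bound_appVars Φ.finite_OC x y
  have hlegit := hτ.extendFresh hx hy hN P
  rw [← MF.osubst_extendFresh τ N (A := Φ.OC) fun _ hm => Or.inr hm]
  refine hP.induction (Q := fun f => (f.osubst (τ.extendFresh Φ.OC N)).TransformValid x y D)
    (fun h hh => ?_) fun Ξ hΞ hs f hinst => (hS Ξ hΞ).inst hinst _ hlegit D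
  rw [MF.osubst_extendFresh τ N (A := Φ.OC) fun _ hm => Or.inl ⟨h, hh, hm⟩]
  exact hvalid h hh

end Soundness

section TransformEval

variable {x y : ℕ} {D : Type}

theorem transformVar_or_self (b : Bool) (i : ℕ) :
    transformVar x y (b || decide (i = x)) i = transformVar x y b i := by
  grind [transformVar]

theorem transformVar_ne_of_ne {i j : ℕ}
    (h : transformVar x y true i ≠ transformVar x y true j) (b : Bool) :
    transformVar x y b i ≠ transformVar x y b j := by
  grind [transformVar]

theorem transformVar_or_of_ne {b : Bool} {i j : ℕ}
    (h : transformVar x y (b || decide (i = x)) i ≠ transformVar x y (b || decide (i = x)) j) :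
    transformVar x y (b || decide (i = x)) j = transformVar x y b j := by
  grind [transformVar]

namespace FM

theorem transformEval_congr {f : FM} {b : Bool} {ρ ρ' : ℕ → D}
    (h : ∀ k ∈ f.vars, ρ (transformVar x y b k) = ρ' (transformVar x y b k)) :
    f.transformEval x y b ρ ↔ f.transformEval x y b ρ' := by
  induction f generalizing b ρ ρ' with
  | eq i j => simp only [transformEval, h i (Or.inl rfl), h j (Or.inr rfl)]
  | imp p q ihp ihq =>
    exact imp_congr (ihp fun k hk => h k (Or.inl hk)) (ihq fun k hk => h k (Or.inr hk))
  | not p ih => exact not_congr (ih h)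
  | all i p ih =>
    refine forall_congr' fun d => ih fun k hk => ?_
    -- Entering the scope of `∀x` turns `y` into `x`, a variable of `∀x p`.
    have hread : ∃ l ∈ (FM.all i p).vars,
        transformVar x y b l = transformVar x y (b || decide (i = x)) k := by
      have hi : i ∈ (FM.all i p).vars := Or.inl rfl
      have hk' : k ∈ (FM.all i p).vars := Or.inr hk
      grind [transformVar]
    obtain ⟨l, hl, hlk⟩ := hread
    simp only [Function.update_apply, ← hlk, h l hl]

theorem transformEval_flag_congr {f : FM} (hy : y ∉ f.vars) (b b' : Bool) (ρ : ℕ → D) :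
    f.transformEval x y b ρ ↔ f.transformEval x y b' ρ := by
  have transformVar_eq {k : ℕ} (hk : k ∈ f.vars) (c : Bool) : transformVar x y c k = k := by
    refine if_neg ?_
    rintro ⟨_, rfl⟩
    exact hy hk
  induction f generalizing b b' ρ with
  | eq i j =>
    simp only [transformEval, transformVar_eq (Or.inl rfl), transformVar_eq (Or.inr rfl)]
  | imp p q ihp ihq =>
    exact imp_congr
      (ihp (fun h => hy (Or.inl h)) b b' ρ fun hk => transformVar_eq (Or.inl hk))
      (ihq (fun h => hy (Or.inr h)) b b' ρ fun hk => transformVar_eq (Or.inr hk))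
  | not p ih => exact not_congr (ih hy b b' ρ transformVar_eq)
  | all i p ih =>
    simp only [transformEval, transformVar_eq (Or.inl rfl)]
    exact forall_congr' fun d =>
      ih (fun h => hy (Or.inr h)) _ _ _ fun hk => transformVar_eq (Or.inr hk)

theorem transformEval_all_of_fresh {f : FM} {i : ℕ}
    (hi : ∀ k ∈ f.vars, transformVar x y true i ≠ transformVar x y true k) {b : Bool} {ρ : ℕ → D}
    (hf : f.transformEval x y b ρ) : (FM.all i f).transformEval x y b ρ := by
  intro d
  have hflag (ρ' : ℕ → D) :
      f.transformEval x y (b || decide (i = x)) ρ' ↔ f.transformEval x y b ρ' := by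
    by_cases hix : i = x
    · have hy : y ∉ f.vars := fun hy => hi y hy (by grind [transformVar])
      exact transformEval_flag_congr hy _ _ ρ'
    · simp only [hix, decide_false, Bool.or_false]
  rw [hflag]
  refine (transformEval_congr fun k hk => ?_).1 hf
  rw [Function.update_of_ne (transformVar_ne_of_ne (hi k hk) b).symm]

theorem transformEval_all_comm {f : FM} {i j : ℕ} {b : Bool} {ρ : ℕ → D}
    (h : (FM.all i (.all j f)).transformEval x y b ρ) :
    (FM.all j (.all i f)).transformEval x y b ρ := by
  intro e d
  rw [Bool.or_right_comm]
  by_cases hij : transformVar x y (b || decide (i = x) || decide (j = x)) i =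
      transformVar x y (b || decide (i = x) || decide (j = x)) j
  · -- Both quantifiers bind the same variable: only the value `d` of the inner one counts.
    refine (transformEval_congr fun k _ => ?_).1 (h d d)
    grind [transformVar, Function.update_apply]
  · have hi : transformVar x y (b || decide (j = x)) i = transformVar x y b i := by
      grind [transformVar]
    have hj : transformVar x y (b || decide (i = x)) j = transformVar x y b j := by
      grind [transformVar]
    have hne : transformVar x y b i ≠ transformVar x y b j := by grind [transformVar]
    have hde := h d e
    rw [hj, Function.update_comm hne] at hde
    rwa [hi]

theorem transformEval_all_not_all {f : FM} {i : ℕ} {b : Bool} {ρ : ℕ → D}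
    (h : ¬ (FM.all i f).transformEval x y b ρ) :
    (FM.all i (.not (.all i f))).transformEval x y b ρ := by
  intro d hall
  refine h fun e => ?_
  have he := hall e
  rwa [transformVar_or_self, Function.update_idem, Bool.or_assoc, Bool.or_self] at he

theorem transformEval_eq_update {i j : ℕ}
    (hij : transformVar x y true i ≠ transformVar x y true j) (b : Bool) (ρ : ℕ → D) (d : D) :
    (FM.eq i j).transformEval x y (b || decide (i = x))
      (Function.update ρ (transformVar x y b i) d) ↔ d = ρ (transformVar x y b j) := by
  simp only [transformEval, transformVar_or_self,
    transformVar_or_of_ne (transformVar_ne_of_ne hij _), Function.update_self,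
    Function.update_of_ne (transformVar_ne_of_ne hij b).symm]

theorem transformEval_not_all_ne {i j : ℕ}
    (hij : transformVar x y true i ≠ transformVar x y true j) (b : Bool) (ρ : ℕ → D) :
    ¬ (FM.all i (.not (.eq i j))).transformEval x y b ρ := fun h =>
  h (ρ (transformVar x y b j)) ((transformEval_eq_update hij b ρ _).2 rfl)

theorem transformEval_all_subst {i j : ℕ}
    (hij : transformVar x y true i ≠ transformVar x y true j) (f : FM) (b : Bool) (ρ : ℕ → D) :
    (FM.all i (.imp (.eq i j) (.imp f (.all i (.imp (.eq i j) f))))).transformEval x y b ρ := by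
  intro d hd hf e he
  rw [transformVar_or_self, Function.update_idem, Bool.or_assoc, Bool.or_self] at he ⊢
  rw [transformEval_eq_update hij] at hd he
  rwa [he, ← hd]

theorem transformVar_or_of_not_all_eq {i j : ℕ} {b : Bool} {ρ : ℕ → D}
    (h : ¬ (FM.all i (.eq i j)).transformEval x y b ρ) :
    transformVar x y (b || decide (i = x)) j = transformVar x y b j ∧
      transformVar x y b j ≠ transformVar x y b i := by
  have hne : transformVar x y (b || decide (i = x)) i ≠ transformVar x y (b || decide (i = x)) j :=
    fun heq => h fun d => congrArg _ heq
  have hj := transformVar_or_of_ne hne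
  rw [hj, transformVar_or_self] at hne
  exact ⟨hj, hne.symm⟩

theorem transformEval_all_eq {i j k : ℕ} {b : Bool} {ρ : ℕ → D}
    (hij : ¬ (FM.all i (.eq i j)).transformEval x y b ρ)
    (hik : ¬ (FM.all i (.eq i k)).transformEval x y b ρ)
    (hjk : (FM.eq j k).transformEval x y b ρ) : (FM.all i (.eq j k)).transformEval x y b ρ := by
  obtain ⟨hj, hji⟩ := transformVar_or_of_not_all_eq hij
  obtain ⟨hk, hki⟩ := transformVar_or_of_not_all_eq hik
  intro d
  simpa only [transformEval, hj, hk, Function.update_of_ne hji, Function.update_of_ne hki] using hjk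

end FM

end TransformEval

section Axioms

variable (x y : ℕ)

theorem transformTrue_ax_mp : ax_mp.TransformTrue x y := by
  intro τ _ D hyps b ρ
  exact hyps (.imp (.phi 0) (.phi 1)) (by simp [ax_mp]) b ρ (hyps (.phi 0) (by simp [ax_mp]) b ρ)

theorem transformTrue_ax_minimp : ax_minimp.TransformTrue x y :=
  fun _ _ _ _ _ _ _ hψχ hθψ hψ => hθψ (fun _ => hψ) (hψχ hψ)

theorem transformTrue_ax_peirce : ax_peirce.TransformTrue x y :=
  fun _ _ _ _ _ _ h => Classical.byContradiction fun hnφ => hnφ (h fun hφ => absurd hφ hnφ)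

theorem transformTrue_ax_contrap : ax_contrap.TransformTrue x y :=
  fun _ _ _ _ _ _ h hψ hφ => h hφ hψ

theorem transformTrue_ax_notelim : ax_notelim.TransformTrue x y :=
  fun _ _ _ _ _ _ hnφ hφ => absurd hφ hnφ

theorem transformTrue_ax_gen : ax_gen.TransformTrue x y :=
  fun _ _ _ hyps _ _ _ => hyps (.phi 0) (Finset.mem_singleton_self _) _ _

theorem transformTrue_ax_ALLdistr : ax_ALLdistr.TransformTrue x y :=
  fun _ _ _ _ _ _ himp hφ d => himp d (hφ d)

theorem transformTrue_ax_modal5 : ax_modal5.TransformTrue x y :=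
  fun _ _ _ _ _ _ => FM.transformEval_all_not_all

theorem transformTrue_ax_vacGen : ax_vacGen.TransformTrue x y := by
  intro τ hτ D _ b ρ
  exact FM.transformEval_all_of_fresh (hτ (.vr 0) (.fm 0) rfl nofun _ rfl)

theorem transformTrue_ax_ALLcomm : ax_ALLcomm.TransformTrue x y :=
  fun _ _ _ _ _ _ => FM.transformEval_all_comm

theorem transformTrue_ax_EQrefl : ax_EQrefl.TransformTrue x y :=
  fun _ _ _ _ _ _ => rfl

theorem transformTrue_ax_EQsymm : ax_EQsymm.TransformTrue x y :=
  fun _ _ _ _ _ _ => Eq.symm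

theorem transformTrue_ax_EQtrans : ax_EQtrans.TransformTrue x y :=
  fun _ _ _ _ _ _ => Eq.trans

theorem transformTrue_ax_denot : ax_denot.TransformTrue x y := by
  intro τ hτ D _ b ρ _
  exact FM.transformEval_not_all_ne (hτ (.vr 0) (.vr 1) rfl nofun _ rfl _ rfl).symm b ρ

theorem transformTrue_ax_subst : ax_subst.TransformTrue x y := by
  intro τ hτ D _
  exact FM.transformEval_all_subst (hτ (.vr 0) (.vr 1) (Or.inl rfl) nofun _ rfl _ rfl) _

theorem transformTrue_ax_genEq : ax_genEq.TransformTrue x y :=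
  fun _ _ _ _ _ _ => FM.transformEval_all_eq

theorem transformTrue_of_mem_TMM_diff {Ξ : Scheme} (hΞ : Ξ ∈ TMM \ {ax_spec, ax_ALLeq}) :
    Ξ.TransformTrue x y := by
  obtain ⟨hTMM, hne⟩ := hΞ
  rcases hTMM with rfl | rfl | rfl | rfl | rfl | rfl | rfl | rfl | rfl | rfl | rfl | rfl | rfl |
    rfl | rfl | rfl | rfl | rfl
  · exact transformTrue_ax_mp x y
  · exact transformTrue_ax_minimp x y
  · exact transformTrue_ax_peirce x y
  · exact transformTrue_ax_contrap x y
  · exact transformTrue_ax_notelim x y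
  · exact transformTrue_ax_gen x y
  · exact transformTrue_ax_ALLdistr x y
  · exact absurd (Or.inl rfl) hne
  · exact transformTrue_ax_modal5 x y
  · exact transformTrue_ax_vacGen x y
  · exact transformTrue_ax_ALLcomm x y
  · exact transformTrue_ax_EQrefl x y
  · exact transformTrue_ax_EQsymm x y
  · exact transformTrue_ax_EQtrans x y
  · exact transformTrue_ax_denot x y
  · exact transformTrue_ax_subst x y
  · exact absurd (Or.inr rfl) hne
  · exact transformTrue_ax_genEq x y

variable {x y}

theorem not_transformTrue_ax_ALLeq (hxy : x ≠ y) : ¬ ax_ALLeq.TransformTrue x y := by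
  intro h
  let τ : OSubst := ⟨fun i => if i = 0 then x else y, fun _ => .eq x y⟩
  have hall (ρ : ℕ → Bool) : (FM.all x (.eq x y)).transformEval x y false ρ := by
    intro d
    simp [FM.transformEval, transformVar]
  have hALLeq := h τ nofun Bool nofun false (fun _ => true) (hall _) (hall _) false
  simp [τ, MF.osubst, FM.transformEval, transformVar, hxy, hxy.symm] at hALLeq

end Axioms

/-- The axiom scheme ALLeq is not provable from TMM ∖ {spec, ALLeq}. -/
theorem ALLeq_independent :
    ¬ Provable (TMM \ {ax_spec, ax_ALLeq}) ax_ALLeq := by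
  intro hALLeq
  exact not_transformTrue_ax_ALLeq zero_ne_one
    (hALLeq.transformTrue fun _ => transformTrue_of_mem_TMM_diff 0 1)
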